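/- Let n be a natural number, E a real normed vector space, and let 𝒟 ⊆ Fin n be a subset of token indices (the data tokens), with complement 𝒩 (the non-data tokens). Let α, α' : Fin n → ℝ be two sets of attention weights with α j ≥ 0 and α' j ≥ 0 for all j, and let V, V' : Fin n → E be two sets of value vectors with ‖V j‖ ≤ M and ‖V' j‖ ≤ M for all j, for some M ≥ 0. Assume the non-data tokens are unaffected: α' j = α j and V' j = V j for every j ∈ 𝒩. Let ε ≥ 0 and assume the attention mass on data tokens is small in both cases: ∑_{j ∈ 𝒟} α j ≤ ε and ∑_{j ∈ 𝒟} α' j ≤ ε. Then the attention outputs satisfy ‖(∑_{j} α' j • V' j) − (∑_{j} α j • V j)‖ ≤ 2 * ε * M. -/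

import Mathlib

theorem norm_sum_smul_le_sum_norm_mul {ι 𝕜 E : Type*} [SeminormedRing 𝕜]
    [SeminormedAddCommGroup E] [Module 𝕜 E] [IsBoundedSMul 𝕜 E]
    (s : Finset ι) (a : ι → 𝕜) {v : ι → E} {M : ℝ} (hv : ∀ j ∈ s, ‖v j‖ ≤ M) :
    ‖∑ j ∈ s, a j • v j‖ ≤ (∑ j ∈ s, ‖a j‖) * M := by
  rw [Finset.sum_mul]
  refine norm_sum_le_of_le s fun j hj => ?_
  calc
    ‖a j • v j‖ ≤ ‖a j‖ * ‖v j‖ := norm_smul_le _ _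
    _ ≤ ‖a j‖ * M := by gcongr; exact hv j hj

theorem sum_sub_sum_eq_of_subset {ι G : Type*} [AddCommGroup G] {s t : Finset ι} (hst : s ⊆ t)
    {f g : ι → G} (hfg : ∀ j ∈ t, j ∉ s → f j = g j) :
    (∑ j ∈ t, f j) - ∑ j ∈ t, g j = (∑ j ∈ s, f j) - ∑ j ∈ s, g j := by
  rw [← Finset.sum_sub_distrib, ← Finset.sum_sub_distrib]
  exact (Finset.sum_subset hst fun j hjt hjs => sub_eq_zero.2 (hfg j hjt hjs)).symm

theorem attention_missing_mass_general {ι 𝕜 E : Type*} [Fintype ι] [SeminormedRing 𝕜]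
    [SeminormedAddCommGroup E] [Module 𝕜 E] [IsBoundedSMul 𝕜 E]
    (𝒟 : Finset ι) (α α' : ι → 𝕜) (V V' : ι → E) (M ε ε' : ℝ)
    (hV : ∀ j ∈ 𝒟, ‖V j‖ ≤ M) (hV' : ∀ j ∈ 𝒟, ‖V' j‖ ≤ M) (hM : 0 ≤ M)
    (hN : ∀ j ∉ 𝒟, α' j • V' j = α j • V j)
    (hmass : ∑ j ∈ 𝒟, ‖α j‖ ≤ ε) (hmass' : ∑ j ∈ 𝒟, ‖α' j‖ ≤ ε') :
    ‖(∑ j, α' j • V' j) - ∑ j, α j • V j‖ ≤ (ε + ε') * M := by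
  rw [sum_sub_sum_eq_of_subset 𝒟.subset_univ fun j _ hj => hN j hj]
  calc
    ‖(∑ j ∈ 𝒟, α' j • V' j) - ∑ j ∈ 𝒟, α j • V j‖
    _ ≤ ‖∑ j ∈ 𝒟, α' j • V' j‖ + ‖∑ j ∈ 𝒟, α j • V j‖ := norm_sub_le _ _
    _ ≤ (∑ j ∈ 𝒟, ‖α' j‖) * M + (∑ j ∈ 𝒟, ‖α j‖) * M :=
      add_le_add (norm_sum_smul_le_sum_norm_mul 𝒟 α' hV') (norm_sum_smul_le_sum_norm_mul 𝒟 α hV)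
    _ ≤ ε' * M + ε * M := by gcongr
    _ = (ε + ε') * M := by ring

/-- Hallucination model (1) of the Negation Invariance theorem (quantitative form):
if a transformation leaves attention weights and values unchanged on the non-data
tokens `𝒟ᶜ`, all weights are nonnegative, all value vectors have norm at most `M`,
and the attention mass on the data tokens `𝒟` is at most `ε` in both cases, then
the attention outputs differ in norm by at most `2 * ε * M`. -/
theorem attention_missing_mass
    {n : ℕ} {E : Type*} [NormedAddCommGroup E] [NormedSpace ℝ E]
    (𝒟 : Finset (Fin n))
    (α α' : Fin n → ℝ) (V V' : Fin n → E) (M ε : ℝ)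
    (hα : ∀ j, 0 ≤ α j) (hα' : ∀ j, 0 ≤ α' j)
    (hV : ∀ j, ‖V j‖ ≤ M) (hV' : ∀ j, ‖V' j‖ ≤ M)
    (hM : 0 ≤ M) (hε : 0 ≤ ε)
    (hN : ∀ j ∈ 𝒟ᶜ, α' j = α j ∧ V' j = V j)
    (hmass : ∑ j ∈ 𝒟, α j ≤ ε) (hmass' : ∑ j ∈ 𝒟, α' j ≤ ε) :
    ‖(∑ j, α' j • V' j) - ∑ j, α j • V j‖ ≤ 2 * ε * M := by
  have hcontrib : ∀ j ∉ 𝒟, α' j • V' j = α j • V j := fun j hj => by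
    obtain ⟨hweight, hvalue⟩ := hN j (Finset.mem_compl.2 hj)
    rw [hweight, hvalue]
  rw [two_mul]
  exact attention_missing_mass_general 𝒟 α α' V V' M ε ε (fun j _ => hV j) (fun j _ => hV' j) hM
    hcontrib (by simpa only [Real.norm_of_nonneg (hα _)] using hmass)
    (by simpa only [Real.norm_of_nonneg (hα' _)] using hmass')
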